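/- Let m > 0, let B and M be positive integers, and let 0 < R < M. With γ_1, …, γ_B i.i.d. with law μ_m and P^ℓ_out(s, R) = Pr( (1/B) Σ_{b=1}^B min(M, log₂(1 + γ_b s)) < R ), one has lim_{s → ∞} −log P^ℓ_out(s, R) / log s = m d_B(R), where d_B(R) = 1 + ⌊B(1 − R/M)⌋ is the Singleton bound. That is, the SNR exponent of the lower bound to the outage probability of the Nakagami-m block-fading channel equals m times the Singleton bound. -/

import Mathlib

open MeasureTheory ProbabilityTheory Real Filter

/-- Density of the Nakagami-m fading power gain (Gamma distribution, shape m, rate m). -/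
noncomputable def fgamma (m x : ℝ) : ℝ :=
  if 0 ≤ x then m ^ m * x ^ (m - 1) * Real.exp (-(m * x)) / Real.Gamma m else 0

/-- The Nakagami-m fading power gain law μ_m. -/
noncomputable def muN (m : ℝ) : Measure ℝ :=
  MeasureTheory.volume.withDensity fun x => ENNReal.ofReal (fgamma m x)

/-- CDF of μ_m. -/
noncomputable def Fgamma (m x : ℝ) : ℝ := ∫ t in (0:ℝ)..x, fgamma m t

/-- Law of A(s) = log₂(1+γs) for γ ∼ μ_m conditioned on {γ ≤ (2^M-1)/s}. -/
noncomputable def nuA (m : ℝ) (M : ℕ) (s : ℝ) : Measure ℝ :=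
  Measure.map (fun x => Real.logb 2 (1 + x * s))
    ((muN m)[|{x : ℝ | x ≤ ((2:ℝ) ^ M - 1) / s}])


/-- The lower bound to the outage probability. -/
noncomputable def PoutL (m : ℝ) (B M : ℕ) (s R : ℝ) : ℝ :=
  ((Measure.pi fun _ : Fin B => muN m)
    {γ : Fin B → ℝ |
      (1 / (B : ℝ)) * ∑ b, min (M : ℝ) (Real.logb 2 (1 + γ b * s)) < R}).toReal

/-!
Write `F` for the distribution function of the gain, which vanishes at `0` to the order `m`. Up to
an event of probability `F ((2 ^ M - 1) / s)` a block carries its full `M` bits. An outage forces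
`d` blocks to be that weak, because `B - d + 1` saturated blocks already reach the rate `R`.
Conversely `R` exceeds the average of `B - d` saturated blocks by a fixed margin, so for a small
fixed `ε` an outage occurs as soon as `d` given blocks have gain at most `(2 ^ ε - 1) / s`. Hence
the outage probability lies between two quantities of the form `K * F (c / s) ^ d`.
-/

open scoped Topology

section LogExponent

lemma tendsto_log_div_log_of_tendsto_div_rpow {F : ℝ → ℝ} {a C : ℝ} (hC : 0 < C)
    (hF : Tendsto (fun t => F t / t ^ a) (𝓝[>] 0) (𝓝 C)) :
    Tendsto (fun t => log (F t) / log t) (𝓝[>] 0) (𝓝 a) := by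
  have hlog : Tendsto (fun t => log (F t / t ^ a) / log t) (𝓝[>] 0) (𝓝 0) :=
    (hF.log hC.ne').div_atBot tendsto_log_nhdsGT_zero
  have hsum : Tendsto (fun t => a + log (F t / t ^ a) / log t) (𝓝[>] 0) (𝓝 a) := by
    simpa only [add_zero] using hlog.const_add a
  refine hsum.congr' ?_
  filter_upwards [hF.eventually_const_lt hC, Ioo_mem_nhdsGT one_pos] with t hquot ht
  have hpow : 0 < t ^ a := rpow_pos_of_pos ht.1 a
  have hFt : F t ≠ 0 := ((div_pos_iff_of_pos_right hpow).mp hquot).ne'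
  have hlogt : log t ≠ 0 := (log_neg ht.1 ht.2).ne
  rw [log_div hFt hpow.ne', log_rpow ht.1]
  field_simp
  ring

lemma tendsto_log_comp_const_div_div_log {F : ℝ → ℝ} {a c : ℝ} (hc : 0 < c)
    (hF : Tendsto (fun t => log (F t) / log t) (𝓝[>] 0) (𝓝 a)) :
    Tendsto (fun s => log (F (c / s)) / log s) atTop (𝓝 (-a)) := by
  have harg : Tendsto (fun s => c / s) atTop (𝓝[>] 0) :=
    tendsto_nhdsWithin_iff.mpr ⟨tendsto_const_nhds.div_atTop tendsto_id,
      (eventually_gt_atTop 0).mono fun s hs => div_pos hc hs⟩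
  have hratio : Tendsto (fun s => log c / log s - 1) atTop (𝓝 (-1)) := by
    simpa only [zero_sub] using (tendsto_const_nhds.div_atTop tendsto_log_atTop).sub_const 1
  have hprod := (hF.comp harg).mul hratio
  rw [mul_neg_one] at hprod
  refine hprod.congr' ?_
  filter_upwards [eventually_gt_atTop 1, eventually_gt_atTop c] with s hs hcs
  have hs0 : 0 < s := one_pos.trans hs
  have hlogs : log s ≠ 0 := (log_pos hs).ne'
  have hlogc : log (c / s) ≠ 0 := (log_neg (div_pos hc hs0) ((div_lt_one hs0).mpr hcs)).ne
  have hsplit : log c / log s - 1 = log (c / s) / log s := by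
    rw [log_div hc.ne' hs0.ne', sub_div, div_self hlogs]
  rw [Function.comp_apply, hsplit, div_mul_div_cancel₀ hlogc]

lemma tendsto_neg_log_const_mul_pow_div_log {F : ℝ → ℝ} {a c K : ℝ} (hc : 0 < c) (hK : 0 < K)
    (hpos : ∀ t, 0 < t → 0 < F t)
    (hF : Tendsto (fun t => log (F t) / log t) (𝓝[>] 0) (𝓝 a)) (d : ℕ) :
    Tendsto (fun s => -log (K * F (c / s) ^ d) / log s) atTop (𝓝 (a * d)) := by
  have hconst : Tendsto (fun s => log K / log s) atTop (𝓝 0) :=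
    tendsto_const_nhds.div_atTop tendsto_log_atTop
  have hlim := (hconst.add ((tendsto_log_comp_const_div_div_log hc hF).const_mul (d : ℝ))).neg
  rw [zero_add, mul_neg, neg_neg, mul_comm] at hlim
  refine hlim.congr' ?_
  filter_upwards [eventually_gt_atTop 0] with s hs
  have hFs : 0 < F (c / s) := hpos _ (div_pos hc hs)
  rw [log_mul hK.ne' (pow_pos hFs d).ne', log_pow]
  ring

lemma tendsto_neg_log_div_log_of_le_of_le {F P : ℝ → ℝ} {a c C K : ℝ} {d : ℕ}
    (hpos : ∀ t, 0 < t → 0 < F t)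
    (hF : Tendsto (fun t => log (F t) / log t) (𝓝[>] 0) (𝓝 a)) (hc : 0 < c) (hC : 0 < C)
    (hlower : ∀ s, 0 < s → F (c / s) ^ d ≤ P s)
    (hupper : ∀ s, 0 < s → P s ≤ K * F (C / s) ^ d) :
    Tendsto (fun s => -log (P s) / log s) atTop (𝓝 (a * d)) := by
  have hFpow : ∀ s, 0 < s → 0 < F (c / s) ^ d := fun s hs => pow_pos (hpos _ (div_pos hc hs)) d
  have hP : ∀ s, 0 < s → 0 < P s := fun s hs => (hFpow s hs).trans_le (hlower s hs)
  have hK : 0 < K := pos_of_mul_pos_left ((hP 1 one_pos).trans_le (hupper 1 one_pos))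
    (pow_pos (hpos _ (div_pos hC one_pos)) d).le
  have hlogF := tendsto_neg_log_const_mul_pow_div_log hc one_pos hpos hF d
  simp only [one_mul] at hlogF
  refine tendsto_of_tendsto_of_tendsto_of_le_of_le'
    (tendsto_neg_log_const_mul_pow_div_log hC hK hpos hF d) hlogF ?_ ?_
  all_goals filter_upwards [eventually_ge_atTop 1] with s hs
  all_goals
    have hs0 : 0 < s := one_pos.trans_le hs
    refine div_le_div_of_nonneg_right (neg_le_neg ?_) (log_nonneg hs)
  · exact log_le_log (hP s hs0) (hupper s hs0)
  · exact log_le_log (hFpow s hs0) (hlower s hs0)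

end LogExponent

section ProductMeasure

variable {ι α : Type*} [Fintype ι] [MeasurableSpace α]

lemma pi_real_setOf_forall_mem (μ : Measure α) [IsProbabilityMeasure μ] (S : Finset ι) (A : Set α) :
    (Measure.pi fun _ : ι => μ).real {x | ∀ b ∈ S, x b ∈ A} = μ.real A ^ S.card := by
  have hpi := Measure.pi_pi_finset (fun _ : ι => μ) (fun _ => A) S
  rw [Finset.prod_const] at hpi
  exact (congrArg ENNReal.toReal hpi).trans (ENNReal.toReal_pow _ _)

lemma pi_real_setOf_le_card_mem_le_choose_mul (μ : Measure α) [IsProbabilityMeasure μ] (A : Set α)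
    [DecidablePred (· ∈ A)] (d : ℕ) :
    (Measure.pi fun _ : ι => μ).real {x | d ≤ (Finset.univ.filter (x · ∈ A)).card} ≤
      (Fintype.card ι).choose d * μ.real A ^ d := by
  have hcover : {x : ι → α | d ≤ (Finset.univ.filter (x · ∈ A)).card} ⊆
      ⋃ S ∈ Finset.univ.powersetCard d, {x | ∀ b ∈ S, x b ∈ A} := by
    intro x hx
    obtain ⟨S, hS, hcard⟩ := Finset.exists_subset_card_eq hx
    exact Set.mem_biUnion (Finset.mem_powersetCard.mpr ⟨Finset.subset_univ S, hcard⟩)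
      fun b hb => (Finset.mem_filter.mp (hS hb)).2
  calc (Measure.pi fun _ : ι => μ).real {x | d ≤ (Finset.univ.filter (x · ∈ A)).card}
      ≤ ∑ S ∈ Finset.univ.powersetCard d,
          (Measure.pi fun _ : ι => μ).real {x | ∀ b ∈ S, x b ∈ A} :=
        (measureReal_mono hcover (measure_ne_top _ _)).trans (measureReal_biUnion_finset_le _ _)
    _ = ∑ _ ∈ (Finset.univ : Finset ι).powersetCard d, μ.real A ^ d :=
        Finset.sum_congr rfl fun _ hS => by
          rw [pi_real_setOf_forall_mem, (Finset.mem_powersetCard.mp hS).2]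
    _ = (Fintype.card ι).choose d * μ.real A ^ d := by
        rw [Finset.sum_const, Finset.card_powersetCard, Finset.card_univ, nsmul_eq_mul]

lemma ae_pi_forall {μ : Measure α} [SigmaFinite μ] {p : α → Prop} (hp : ∀ᵐ x ∂μ, p x) :
    ∀ᵐ x ∂(Measure.pi fun _ : ι => μ), ∀ b, p (x b) :=
  ae_all_iff.mpr fun _ => Measure.tendsto_eval_ae_ae.eventually hp

end ProductMeasure

section BlockRates

variable {ι : Type*} [Fintype ι]

lemma sum_ite_mem_const {A : Type*} [Ring A] [DecidableEq ι] (S : Finset ι) (u v : A) :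
    ∑ b, (if b ∈ S then u else v) = (Fintype.card ι - S.card) * v + S.card * u := by
  have hcompl : ((Sᶜ).card : A) = Fintype.card ι - S.card := by
    rw [Finset.card_compl, Nat.cast_sub S.card_le_univ]
  rw [Finset.sum_ite, Finset.sum_const, Finset.sum_const, Finset.filter_mem_eq_inter,
    Finset.univ_inter, Finset.filter_notMem_eq_sdiff, ← Finset.compl_eq_univ_sdiff,
    nsmul_eq_mul, nsmul_eq_mul, hcompl, add_comm]

/-- The number of bits conveyed at SNR `s` by a block with power gain `x`, capped at the `M` bits
of the signal constellation. -/
noncomputable def cappedRate (M s x : ℝ) : ℝ :=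
  min M (logb 2 (1 + x * s))

lemma le_cappedRate {M s x c : ℝ} (hc : c ≤ M) (hx : 2 ^ c - 1 ≤ x * s) :
    c ≤ cappedRate M s x := by
  have hpow : (2 : ℝ) ^ c ≤ 1 + x * s := by linarith
  have harg : 0 < 1 + x * s := (rpow_pos_of_pos two_pos c).trans_le hpow
  exact le_min hc ((le_logb_iff_rpow_le one_lt_two harg).mpr hpow)

lemma cappedRate_le {M s x c : ℝ} (hx : 0 ≤ x * s) (hxc : x * s ≤ 2 ^ c - 1) :
    cappedRate M s x ≤ c :=
  (min_le_right _ _).trans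
    ((logb_le_iff_le_rpow one_lt_two (by linarith)).mpr (by linarith))

lemma mul_le_sum_cappedRate {M s : ℝ} {x : ι → ℝ} {S : Finset ι} (hM : 0 ≤ M)
    (hx : ∀ b, 0 ≤ x b * s) (hS : ∀ b ∉ S, 2 ^ M - 1 ≤ x b * s) :
    (Fintype.card ι - S.card) * M ≤ ∑ b, cappedRate M s (x b) := by
  classical
  calc (Fintype.card ι - S.card) * M = ∑ b, (if b ∈ S then 0 else M) := by
        rw [sum_ite_mem_const, mul_zero, add_zero]
    _ ≤ ∑ b, cappedRate M s (x b) := Finset.sum_le_sum fun b _ => by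
        split_ifs with hb
        · exact le_cappedRate hM (by simpa using hx b)
        · exact le_cappedRate le_rfl (hS b hb)

lemma sum_cappedRate_le {M s c : ℝ} {x : ι → ℝ} {S : Finset ι}
    (hx : ∀ b ∈ S, 0 ≤ x b * s) (hS : ∀ b ∈ S, x b * s ≤ 2 ^ c - 1) :
    ∑ b, cappedRate M s (x b) ≤ (Fintype.card ι - S.card) * M + S.card * c := by
  classical
  calc ∑ b, cappedRate M s (x b) ≤ ∑ b, (if b ∈ S then c else M) :=
        Finset.sum_le_sum fun b _ => by
          split_ifs with hb
          · exact cappedRate_le (hx b hb) (hS b hb)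
          · exact min_le_left _ _
    _ = (Fintype.card ι - S.card) * M + S.card * c := sum_ite_mem_const S c M

end BlockRates

section Outage

/-- The Singleton bound `d_B(R)` on the diversity of a code of rate `R` over `B` blocks that carry
at most `M` bits each; an integer, since it drops below `1` when `R` exceeds `M`. -/
noncomputable def singletonBound (B : ℕ) (M R : ℝ) : ℤ :=
  1 + ⌊(B : ℝ) * (1 - R / M)⌋

/-- The probability that `B` blocks with independent power gains of law `μ` convey, at SNR `s`, less
than `R` bits on average, each block being capped at `M` bits. For `μ = muN m` it is `PoutL`. -/
noncomputable def outageProb (μ : Measure ℝ) (B : ℕ) (M s R : ℝ) : ℝ :=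
  (Measure.pi fun _ : Fin B => μ).real
    {γ | (1 / (B : ℝ)) * ∑ b, cappedRate M s (γ b) < R}

variable {μ : Measure ℝ} {B d : ℕ} {M s R : ℝ}

lemma singletonBound_le_iff (hM : 0 < M) {k : ℤ} :
    singletonBound B M R ≤ k ↔ (B - k) * M < B * R := by
  have hexpand : (B : ℝ) * (1 - R / M) = B - B * R / M := by ring
  rw [singletonBound, add_comm, Int.add_one_le_iff, Int.floor_lt, hexpand, sub_lt_comm,
    lt_div_iff₀ hM]

lemma singletonBound_le (hB : 0 < B) (hM : 0 < M) (hR : 0 < R) : singletonBound B M R ≤ B :=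
  (singletonBound_le_iff hM).mpr <| by
    simpa using mul_pos (Nat.cast_pos.mpr hB) hR

lemma one_div_mul_lt_iff (hB : 0 < B) {y : ℝ} : 1 / (B : ℝ) * y < R ↔ y < B * R := by
  rw [one_div, inv_mul_lt_iff₀ (Nat.cast_pos.mpr hB)]

lemma outageProb_le [IsProbabilityMeasure μ] (hμ : ∀ᵐ x ∂μ, 0 ≤ x) (hB : 0 < B) (hM : 0 < M)
    (hd : d ≤ singletonBound B M R) (hs : 0 < s) :
    outageProb μ B M s R ≤ B.choose d * cdf μ ((2 ^ M - 1) / s) ^ d := by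
  set t : ℝ := (2 ^ M - 1) / s
  have hweak : {γ : Fin B → ℝ | (1 / (B : ℝ)) * ∑ b, cappedRate M s (γ b) < R}
      ≤ᵐ[Measure.pi fun _ => μ] {γ | d ≤ (Finset.univ.filter (γ · ∈ Set.Iic t)).card} := by
    filter_upwards [ae_pi_forall hμ] with γ hγ hout
    have hsat := mul_le_sum_cappedRate (S := Finset.univ.filter (γ · ∈ Set.Iic t)) hM.le
      (fun b => mul_nonneg (hγ b) hs.le) fun b hb => by
        have hgt : t < γ b := by simpa using hb
        exact ((div_lt_iff₀ hs).mp hgt).le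
    have hlt := hsat.trans_lt ((one_div_mul_lt_iff hB).mp hout)
    rw [Fintype.card_fin] at hlt
    have hle : singletonBound B M R ≤ (Finset.univ.filter (γ · ∈ Set.Iic t)).card :=
      (singletonBound_le_iff hM).mpr (by simpa only [Int.cast_natCast] using hlt)
    exact Int.ofNat_le.mp (hd.trans hle)
  calc outageProb μ B M s R
      ≤ (Measure.pi fun _ : Fin B => μ).real
          {γ | d ≤ (Finset.univ.filter (γ · ∈ Set.Iic t)).card} :=
        ENNReal.toReal_mono (measure_ne_top _ _) (measure_mono_ae hweak)
    _ ≤ B.choose d * cdf μ t ^ d := by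
        simpa only [Fintype.card_fin, cdf_eq_real] using
          pi_real_setOf_le_card_mem_le_choose_mul (ι := Fin B) μ (Set.Iic t) d

lemma exists_cdf_pow_le_outageProb [IsProbabilityMeasure μ] (hμ : ∀ᵐ x ∂μ, 0 ≤ x) (hB : 0 < B)
    (hM : 0 < M) (hdB : d ≤ B) (hd : singletonBound B M R ≤ d) :
    ∃ c, 0 < c ∧ ∀ s, 0 < s → cdf μ (c / s) ^ d ≤ outageProb μ B M s R := by
  have hgap : 0 < B * R - (B - d) * M :=
    sub_pos.mpr (by exact_mod_cast (singletonBound_le_iff hM).mp hd)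
  obtain ⟨ε, hε, hdε⟩ := exists_pos_mul_lt hgap d
  obtain ⟨S, -, hS⟩ := Finset.exists_subset_card_eq (s := (Finset.univ : Finset (Fin B))) (n := d)
    (by rwa [Finset.card_univ, Fintype.card_fin])
  refine ⟨2 ^ ε - 1, sub_pos.mpr (one_lt_rpow one_lt_two hε), fun s hs => ?_⟩
  have houtage : {γ : Fin B → ℝ | ∀ b ∈ S, γ b ∈ Set.Iic ((2 ^ ε - 1) / s)}
      ≤ᵐ[Measure.pi fun _ => μ] {γ | (1 / (B : ℝ)) * ∑ b, cappedRate M s (γ b) < R} := by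
    filter_upwards [ae_pi_forall hμ] with γ hγ hweak
    have hsum := sum_cappedRate_le (M := M) (fun b _ => mul_nonneg (hγ b) hs.le)
      fun b hb => (le_div_iff₀ hs).mp (hweak b hb)
    rw [Fintype.card_fin, hS] at hsum
    exact (one_div_mul_lt_iff hB).mpr (by linarith)
  rw [cdf_eq_real, ← hS, ← pi_real_setOf_forall_mem]
  exact ENNReal.toReal_mono (measure_ne_top _ _) (measure_mono_ae houtage)

end Outage

section Gamma

variable {a r t : ℝ}

lemma ae_nonneg_gammaMeasure (a r : ℝ) : ∀ᵐ x ∂gammaMeasure a r, 0 ≤ x := by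
  have hnull : gammaMeasure a r (Set.Iio 0) = 0 := by
    rw [gammaMeasure, withDensity_apply _ measurableSet_Iio, lintegral_gammaPDF_of_nonpos le_rfl]
  exact (measure_eq_zero_iff_ae_notMem.mp hnull).mono fun _ hx => not_lt.mp hx

lemma cdf_gammaMeasure_eq_intervalIntegral (ha : 0 < a) (hr : 0 < r) (ht : 0 ≤ t) :
    cdf (gammaMeasure a r) t =
      ∫ x in 0..t, r ^ a / Gamma a * x ^ (a - 1) * exp (-(r * x)) := by
  rw [cdf_gammaMeasure_eq_integral ha hr, intervalIntegral.integral_of_le ht,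
    ← integral_Icc_eq_integral_Ioc]
  have hneg : ∀ x ∈ Set.Iic t \ Set.Icc 0 t, gammaPDFReal a r x = 0 := fun x hx =>
    if_neg fun h0 => hx.2 ⟨h0, hx.1⟩
  rw [setIntegral_eq_of_subset_of_forall_sdiff_eq_zero measurableSet_Iic
    Set.Icc_subset_Iic_self hneg]
  exact setIntegral_congr_fun measurableSet_Icc fun x hx => if_pos hx.1

lemma intervalIntegral_div_gamma_mul_rpow_sub_one (ha : 0 < a) (C : ℝ) :
    ∫ x in 0..t, C / Gamma a * x ^ (a - 1) = C / Gamma (a + 1) * t ^ a := by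
  rw [intervalIntegral.integral_const_mul, integral_rpow (Or.inl (by linarith)), sub_add_cancel,
    zero_rpow ha.ne', sub_zero, Gamma_add_one ha.ne']
  ring

lemma intervalIntegrable_const_mul_rpow_sub_one (ha : 0 < a) (C : ℝ) :
    IntervalIntegrable (fun x => C * x ^ (a - 1)) volume 0 t :=
  (intervalIntegral.intervalIntegrable_rpow' (by linarith)).const_mul C

lemma intervalIntegrable_const_mul_rpow_sub_one_mul_exp (ha : 0 < a) (C r : ℝ) :
    IntervalIntegrable (fun x => C * x ^ (a - 1) * exp (-(r * x))) volume 0 t :=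
  (intervalIntegrable_const_mul_rpow_sub_one ha C).mul_continuousOn (by fun_prop)

lemma cdf_gammaMeasure_le (ha : 0 < a) (hr : 0 < r) (ht : 0 ≤ t) :
    cdf (gammaMeasure a r) t ≤ r ^ a / Gamma (a + 1) * t ^ a := by
  rw [cdf_gammaMeasure_eq_intervalIntegral ha hr ht,
    ← intervalIntegral_div_gamma_mul_rpow_sub_one ha]
  refine intervalIntegral.integral_mono_on_of_le_Ioo ht
    (intervalIntegrable_const_mul_rpow_sub_one_mul_exp ha _ r)
    (intervalIntegrable_const_mul_rpow_sub_one ha _) fun x hx => ?_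
  have hx0 : 0 < x := hx.1
  exact mul_le_of_le_one_right (by positivity)
    (exp_le_one_iff.mpr (neg_nonpos.mpr (mul_pos hr hx0).le))

lemma le_cdf_gammaMeasure (ha : 0 < a) (hr : 0 < r) (ht : 0 ≤ t) :
    r ^ a / Gamma (a + 1) * t ^ a * exp (-(r * t)) ≤ cdf (gammaMeasure a r) t := by
  rw [cdf_gammaMeasure_eq_intervalIntegral ha hr ht,
    ← intervalIntegral_div_gamma_mul_rpow_sub_one ha, ← intervalIntegral.integral_mul_const]
  refine intervalIntegral.integral_mono_on_of_le_Ioo ht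
    ((intervalIntegrable_const_mul_rpow_sub_one ha _).mul_const _)
    (intervalIntegrable_const_mul_rpow_sub_one_mul_exp ha _ r) fun x hx => ?_
  have hx0 : 0 < x := hx.1
  have hxt : x ≤ t := hx.2.le
  gcongr

lemma cdf_gammaMeasure_pos (ha : 0 < a) (hr : 0 < r) (ht : 0 < t) :
    0 < cdf (gammaMeasure a r) t :=
  lt_of_lt_of_le (by positivity) (le_cdf_gammaMeasure ha hr ht.le)

lemma tendsto_cdf_gammaMeasure_div_rpow (ha : 0 < a) (hr : 0 < r) :
    Tendsto (fun t => cdf (gammaMeasure a r) t / t ^ a) (𝓝[>] 0) (𝓝 (r ^ a / Gamma (a + 1))) := by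
  have hexp : Tendsto (fun t => r ^ a / Gamma (a + 1) * exp (-(r * t))) (𝓝[>] 0)
      (𝓝 (r ^ a / Gamma (a + 1))) := by
    refine tendsto_nhdsWithin_of_tendsto_nhds ?_
    have hcont : Continuous fun t => r ^ a / Gamma (a + 1) * exp (-(r * t)) := by fun_prop
    simpa using hcont.tendsto 0
  refine tendsto_of_tendsto_of_tendsto_of_le_of_le' hexp tendsto_const_nhds ?_ ?_
  all_goals filter_upwards [self_mem_nhdsWithin] with t ht
  · rw [le_div_iff₀ (rpow_pos_of_pos ht a), mul_right_comm]
    exact le_cdf_gammaMeasure ha hr (le_of_lt ht)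
  · rw [div_le_iff₀ (rpow_pos_of_pos ht a)]
    exact cdf_gammaMeasure_le ha hr (le_of_lt ht)

lemma tendsto_log_cdf_gammaMeasure_div_log (ha : 0 < a) (hr : 0 < r) :
    Tendsto (fun t => log (cdf (gammaMeasure a r) t) / log t) (𝓝[>] 0) (𝓝 a) :=
  tendsto_log_div_log_of_tendsto_div_rpow (by positivity) (tendsto_cdf_gammaMeasure_div_rpow ha hr)

lemma muN_eq_gammaMeasure (m : ℝ) : muN m = gammaMeasure m m := by
  have hdensity : fgamma m = gammaPDFReal m m := by
    funext x
    rw [fgamma, gammaPDFReal]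
    ring_nf
  exact congrArg (fun f : ℝ → ℝ => volume.withDensity fun x => ENNReal.ofReal (f x)) hdensity

end Gamma

theorem stmt_7_general {μ : Measure ℝ} [IsProbabilityMeasure μ] {a : ℝ} (hμ : ∀ᵐ x ∂μ, 0 ≤ x)
    (hpos : ∀ t, 0 < t → 0 < cdf μ t)
    (hcdf : Tendsto (fun t => log (cdf μ t) / log t) (𝓝[>] 0) (𝓝 a))
    {B d : ℕ} {M R : ℝ} (hB : 0 < B) (hM : 0 < M) (hR : 0 < R)
    (hd : (d : ℤ) = singletonBound B M R) :
    Tendsto (fun s => -log (outageProb μ B M s R) / log s) atTop (𝓝 (a * d)) := by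
  have hdB : d ≤ B := Int.ofNat_le.mp (hd.trans_le (singletonBound_le hB hM hR))
  obtain ⟨c, hc, hlower⟩ := exists_cdf_pow_le_outageProb hμ hB hM hdB hd.ge
  have hthreshold : (0 : ℝ) < 2 ^ M - 1 := sub_pos.mpr (one_lt_rpow one_lt_two hM)
  exact tendsto_neg_log_div_log_of_le_of_le hpos hcdf hc hthreshold hlower
    fun _ hs => outageProb_le hμ hB hM hd.le hs

/-- the SNR exponent of the lower bound to the outage probability equals
m times the Singleton bound d_B(R) = 1 + ⌊B(1 - R/M)⌋. -/
theorem stmt_7 (m : ℝ) (hm : 0 < m) (B M : ℕ) (hB : 0 < B) (hM : 0 < M)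
    (R : ℝ) (hR0 : 0 < R) (hRM : R < (M : ℝ))
    (d : ℕ) (hd : (d : ℤ) = 1 + ⌊(B : ℝ) * (1 - R / (M : ℝ))⌋) :
    Filter.Tendsto (fun s : ℝ => -Real.log (PoutL m B M s R) / Real.log s)
      Filter.atTop (nhds (m * (d : ℝ))) := by
  have := isProbabilityMeasure_gammaMeasure hm hm
  simp only [PoutL, muN_eq_gammaMeasure]
  exact stmt_7_general (ae_nonneg_gammaMeasure m m) (fun _ => cdf_gammaMeasure_pos hm hm)
    (tendsto_log_cdf_gammaMeasure_div_log hm hm) hB (Nat.cast_pos.mpr hM) hR0 hd
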